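/- arXiv:2411.04250 — 2 statements merged into one kernel-verified Lean document; each statement's English description precedes it below -/
import Mathlib

section
/- Let G be a group acting on a set Y and suppose G is generated by two elements a and b. Suppose there exist four pairwise disjoint nonempty subsets Y₁⁺, Y₁⁻, Y₂⁺, Y₂⁻ of Y, and let Y' denote their union. Assume that for every integer k ≥ 1 one has: aᵏ · (Y' \ Y₁⁻) ⊆ Y₁⁺, a⁻ᵏ · (Y' \ Y₁⁺) ⊆ Y₁⁻, bᵏ · (Y' \ Y₂⁻) ⊆ Y₂⁺, and b⁻ᵏ · (Y' \ Y₂⁺) ⊆ Y₂⁻. Then the group homomorphism from the free group on two generators to G sending the two generators to a and b respectively is injective; in particular, since a and b generate G, the group G is isomorphic to a free group of rank 2. -/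
open Pointwise

/-!
The free group on `ι` is the free product of infinite cyclic groups indexed by `ι`. Ping-pong for
free products therefore applies as soon as, for disjoint nonempty sets `X i`, every nonzero power
of the `i`-th generator maps each other set `X j` into `X i`. Now merge the attracting and
repelling sets of each generator: with `A = Y₁⁺ ∪ Y₁⁻` and `B = Y₂⁺ ∪ Y₂⁻`, positive powers of `a`
send `B` into `Y₁⁺` and negative ones into `Y₁⁻`, hence all nonzero powers send `B` into `A`;
symmetrically for `b`.
-/

open Monoid

theorem freeGroup_lift_eq_coprodI_lift_comp {ι G : Type*} [Group G] (a : ι → G) :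
    FreeGroup.lift a =
      (CoprodI.lift fun i ↦ FreeGroup.lift fun _ : Unit ↦ a i).comp
        (freeGroupEquivCoprodI (ι := ι)).toMonoidHom := by
  ext i
  simp

theorem exists_freeGroup_of_zpow_eq (h : FreeGroup Unit) : ∃ n : ℤ, FreeGroup.of () ^ n = h :=
  ⟨FreeGroup.freeGroupUnitEquivInt h, FreeGroup.freeGroupUnitEquivInt.symm_apply_apply h⟩

section PingPong

variable {G Y : Type*} [Group G] [MulAction G Y]

open scoped Function in
theorem ping_pong_free_group_general {ι : Type*} [Nontrivial ι] (a : ι → G) (X : ι → Set Y)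
    (hne : ∀ i, (X i).Nonempty) (hdisj : Pairwise (Disjoint on X))
    (hpp : Pairwise fun i j ↦ ∀ n : ℤ, n ≠ 0 → a i ^ n • X j ⊆ X i) :
    Function.Injective (FreeGroup.lift a) := by
  rw [freeGroup_lift_eq_coprodI_lift_comp, MonoidHom.coe_comp]
  refine .comp ?_ freeGroupEquivCoprodI.injective
  -- When `ι` has only two elements, ping-pong needs a factor with at least three elements.
  have hcard : 3 ≤ Cardinal.mk (FreeGroup Unit) :=
    Cardinal.ofNat_le_aleph0.trans (Cardinal.aleph0_le_mk _)
  refine CoprodI.lift_injective_of_ping_pong _ (.inr ⟨Classical.arbitrary ι, hcard⟩) X hne hdisj ?_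
  intro i j hij h hh
  obtain ⟨n, rfl⟩ := exists_freeGroup_of_zpow_eq h
  have hn : n ≠ 0 := by
    rintro rfl
    exact hh (zpow_zero _)
  simpa only [map_zpow, FreeGroup.lift_apply_of] using hpp hij n hn

theorem freeGroup_lift_pair_injective_of_ping_pong {a b : G} {A B : Set Y} (hA : A.Nonempty)
    (hB : B.Nonempty) (hAB : Disjoint A B) (ha : ∀ n : ℤ, n ≠ 0 → a ^ n • B ⊆ A)
    (hb : ∀ n : ℤ, n ≠ 0 → b ^ n • A ⊆ B) :
    Function.Injective (FreeGroup.lift ![a, b]) := by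
  apply ping_pong_free_group_general ![a, b] ![A, B]
  · exact Fin.forall_fin_two.2 ⟨hA, hB⟩
  · simpa [Pairwise, Fin.forall_fin_two, Function.onFun] using ⟨hAB, hAB.symm⟩
  · simpa [Pairwise, Fin.forall_fin_two] using ⟨ha, hb⟩

theorem zpow_smul_subset_union {g : G} {B Z P M : Set Y} (hB : B ⊆ Z \ (P ∪ M))
    (hpos : ∀ k : ℤ, 1 ≤ k → g ^ k • (Z \ M) ⊆ P)
    (hneg : ∀ k : ℤ, 1 ≤ k → g ^ (-k) • (Z \ P) ⊆ M) (n : ℤ) (hn : n ≠ 0) :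
    g ^ n • B ⊆ P ∪ M := by
  have hBM : B ⊆ Z \ M := hB.trans (Set.sdiff_subset_sdiff_right Set.subset_union_right)
  have hBP : B ⊆ Z \ P := hB.trans (Set.sdiff_subset_sdiff_right Set.subset_union_left)
  rcases hn.lt_or_gt with hn | hn
  · calc
      g ^ n • B ⊆ g ^ (-(-n)) • (Z \ P) := by simpa using hBP
      _ ⊆ M := hneg (-n) (by lia)
      _ ⊆ P ∪ M := Set.subset_union_right
  · calc
      g ^ n • B ⊆ g ^ n • (Z \ M) := Set.smul_set_mono hBM
      _ ⊆ P := hpos n hn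
      _ ⊆ P ∪ M := Set.subset_union_left

end PingPong

/-- Ping-pong lemma: if a group `G` generated by two elements `a` and `b` acts on a set `Y`
with four pairwise disjoint nonempty subsets satisfying the ping-pong conditions, then the
natural homomorphism from the free group on two generators sending the generators to `a`
and `b` is injective, i.e. `G` is free of rank 2. -/
theorem ping_pong_free_group {G Y : Type*} [Group G] [MulAction G Y]
    (a b : G) (hgen : Subgroup.closure ({a, b} : Set G) = ⊤)
    (Y₁p Y₁m Y₂p Y₂m : Set Y)
    (h₁p : Y₁p.Nonempty) (h₁m : Y₁m.Nonempty) (h₂p : Y₂p.Nonempty) (h₂m : Y₂m.Nonempty)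
    (hd₁ : Disjoint Y₁p Y₁m) (hd₂ : Disjoint Y₁p Y₂p) (hd₃ : Disjoint Y₁p Y₂m)
    (hd₄ : Disjoint Y₁m Y₂p) (hd₅ : Disjoint Y₁m Y₂m) (hd₆ : Disjoint Y₂p Y₂m)
    (Y' : Set Y) (hY' : Y' = Y₁p ∪ Y₁m ∪ Y₂p ∪ Y₂m)
    (ha : ∀ k : ℤ, 1 ≤ k → a ^ k • (Y' \ Y₁m) ⊆ Y₁p)
    (ha' : ∀ k : ℤ, 1 ≤ k → a ^ (-k) • (Y' \ Y₁p) ⊆ Y₁m)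
    (hb : ∀ k : ℤ, 1 ≤ k → b ^ k • (Y' \ Y₂m) ⊆ Y₂p)
    (hb' : ∀ k : ℤ, 1 ≤ k → b ^ (-k) • (Y' \ Y₂p) ⊆ Y₂m) :
    Function.Injective (FreeGroup.lift (![a, b] : Fin 2 → G)) := by
  have hdisj : Disjoint (Y₁p ∪ Y₁m) (Y₂p ∪ Y₂m) :=
    (hd₂.union_right hd₃).union_left (hd₄.union_right hd₅)
  have h₁Y' : Y₁p ∪ Y₁m ⊆ Y' := by grind
  have h₂Y' : Y₂p ∪ Y₂m ⊆ Y' := by grind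
  exact freeGroup_lift_pair_injective_of_ping_pong h₁p.inl h₂p.inl hdisj
    (zpow_smul_subset_union (Set.subset_sdiff.2 ⟨h₂Y', hdisj.symm⟩) ha ha')
    (zpow_smul_subset_union (Set.subset_sdiff.2 ⟨h₁Y', hdisj⟩) hb hb')
end

section
/- Let X be a nonempty metric space, let s be a subset of X, and let π : X → X be a 1-Lipschitz nearest-point projection onto s, meaning: π is 1-Lipschitz, for every x ∈ X, π x ∈ s and dist x (π x) = infDist x s, and for every x ∈ X and every y ∈ s with dist x y = infDist x s one has y = π x. Let g : X ≃ᵢ X be a bijective isometry of X mapping s onto itself (g '' s = s). Define the translation length |g| = ⨅_{y ∈ X} dist y (g y), and the minimal set Min(g) = { x ∈ X : dist x (g x) = |g| }. Then for every x ∈ Min(g), the projection π x also belongs to Min(g). -/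
open Function Metric Set

section MetricProjection

variable {X Y : Type*} [PseudoMetricSpace X] [PseudoMetricSpace Y]

/-- `IsMetricProjection s π` says that `π` is the nearest-point projection onto `s`: for every `x`,
the infimum defining `infDist x s` is attained at `π x` and at no other point of `s`. No regularity
of `π` is included. -/
structure IsMetricProjection (s : Set X) (π : X → X) : Prop where
  mem (x : X) : π x ∈ s
  dist_eq_infDist (x : X) : dist x (π x) = infDist x s
  eq_of_dist_eq_infDist {x y : X} (hy : y ∈ s) (hxy : dist x y = infDist x s) : y = π x

theorem IsMetricProjection.semiconj_of_isometry {s : Set X} {π : X → X} {ρ : Y → Y} {g : X → Y}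
    (hπ : IsMetricProjection s π) (hρ : IsMetricProjection (g '' s) ρ) (hg : Isometry g) :
    Semiconj g π ρ := fun x ↦
  hρ.eq_of_dist_eq_infDist (mem_image_of_mem g (hπ.mem x)) <| calc
    dist (g x) (g (π x)) = dist x (π x) := hg.dist_eq x (π x)
    _ = infDist x s := hπ.dist_eq_infDist x
    _ = infDist (g x) (g '' s) := (infDist_image hg).symm

end MetricProjection

section MinSet

variable {X : Type*} [PseudoMetricSpace X] {f g : X → X}

/-- The translation length `|g|` of a self-map `g`, the infimum of its displacement function
`y ↦ dist y (g y)`. -/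
noncomputable def translationLength (g : X → X) : ℝ :=
  ⨅ y, dist y (g y)

/-- The minimal set `Min(g)` of a self-map `g`, the points whose displacement realizes `|g|`.
It is empty when the infimum is not attained. -/
def minSet (g : X → X) : Set X :=
  {x | dist x (g x) = translationLength g}

theorem translationLength_le_dist (g : X → X) (x : X) : translationLength g ≤ dist x (g x) :=
  ciInf_le ⟨0, forall_mem_range.2 fun _ ↦ dist_nonneg⟩ x

theorem dist_map_le_dist_of_commute (hf : LipschitzWith 1 f) (hfg : Function.Commute f g) (x : X) :
    dist (f x) (g (f x)) ≤ dist x (g x) := calc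
  dist (f x) (g (f x)) = dist (f x) (f (g x)) := by rw [hfg.eq x]
  _ ≤ dist x (g x) := by simpa using hf.dist_le_mul x (g x)

theorem mapsTo_minSet_of_commute (hf : LipschitzWith 1 f) (hfg : Function.Commute f g) :
    MapsTo f (minSet g) (minSet g) := fun x hx ↦
  le_antisymm ((dist_map_le_dist_of_commute hf hfg x).trans_eq hx)
    (translationLength_le_dist g (f x))

end MinSet

theorem proj_mem_min_set_general {X : Type*} [PseudoMetricSpace X] {s : Set X} {π g : X → X}
    (hπ_lip : LipschitzWith 1 π) (hπ : IsMetricProjection s π) (hg : Isometry g)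
    (hgs : g '' s = s) : MapsTo π (minSet g) (minSet g) := by
  have hgπ : Function.Commute g π := hπ.semiconj_of_isometry (hgs.symm ▸ hπ) hg
  exact mapsTo_minSet_of_commute hπ_lip hgπ.symm

/-- If `π` is a 1-Lipschitz nearest-point projection of a nonempty metric space `X` onto a
subset `s`, and `g` is a bijective isometry of `X` mapping `s` onto itself, then the
projection of any point of `Min(g)` (the set of points realizing the translation length
`|g| = ⨅ y, dist y (g y)`) again belongs to `Min(g)`. -/
theorem proj_mem_min_set {X : Type*} [MetricSpace X] [Nonempty X]
    (s : Set X) (π : X → X)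
    (hπ_lip : LipschitzWith 1 π)
    (hπ_mem : ∀ x : X, π x ∈ s)
    (hπ_dist : ∀ x : X, dist x (π x) = Metric.infDist x s)
    (hπ_unique : ∀ x : X, ∀ y ∈ s, dist x y = Metric.infDist x s → y = π x)
    (g : X ≃ᵢ X) (hgs : g '' s = s) :
    ∀ x ∈ {x : X | dist x (g x) = ⨅ y : X, dist y (g y)},
      π x ∈ {x : X | dist x (g x) = ⨅ y : X, dist y (g y)} :=
  fun _ hx ↦ proj_mem_min_set_general hπ_lip ⟨hπ_mem, hπ_dist, hπ_unique _ _⟩ g.isometry hgs hx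
end
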